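/- Let Q be a finite acyclic quiver and 𝒬• = (Q¹,…,Q^ℓ) an admissible, ordered, Dynkin subquiver partition such that every positive root of every part Q^j has some coordinate equal to 1 (excluding E₈ parts). For a dimension vector γ^j supported on Q^j₀, the space ℋ_{γ^j} of Q coincides with the corresponding graded piece of ℋ(Q^j) (polynomials in the variables at the vertices of Q^j). Then the ℚ-linear map ⊕_{(γ¹,…,γ^ℓ)} (ℋ_{γ¹} ⊗ ⋯ ⊗ ℋ_{γ^ℓ}) → ℋ(Q), where the sum is over all tuples of dimension vectors with γ^j supported on Q^j₀ and which sends g₁ ⊗ ⋯ ⊗ g_ℓ to the left-to-right product g₁ * ⋯ * g_ℓ in ℋ(Q), is bijective; moreover, for classes supported on a single part Q^j the product of ℋ(Q) agrees with the CoHA product of the quiver Q^j, so this map is an algebra isomorphism ℋ(Q¹) ⊗ ⋯ ⊗ ℋ(Q^ℓ) ≅ ℋ(Q). -/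

import Mathlib

open MvPolynomial
open scoped Classical

/-- A finite quiver with vertex set `Fin n`: a finite type of arrows together with
head and tail maps. -/
structure FinQuiver (n : ℕ) where
  Arr : Type
  [fintypeArr : Fintype Arr]
  hd : Arr → Fin n
  tl : Arr → Fin n

attribute [instance] FinQuiver.fintypeArr

variable {n : ℕ}

/-- `Q` is acyclic: there is no oriented cycle, i.e. no path
`a₁, …, a_{k+1}` (with `hd aₘ = tl aₘ₊₁`) whose final head equals its initial tail. -/
def FinQuiver.Acyclic (Q : FinQuiver n) : Prop :=
  ∀ (k : ℕ) (c : Fin (k + 1) → Q.Arr),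
    (∀ m : Fin k, Q.hd (c m.castSucc) = Q.tl (c m.succ)) →
    Q.hd (c (Fin.last k)) ≠ Q.tl (c 0)

/-- The Euler form `χ_Q` of the quiver `Q`. -/
def FinQuiver.euler (Q : FinQuiver n) (α β : Fin n → ℕ) : ℤ :=
  ∑ i : Fin n, (α i : ℤ) * β i - ∑ a : Q.Arr, (α (Q.tl a) : ℤ) * β (Q.hd a)

/-- The opposite antisymmetrization `⟨α,β⟩ = χ_Q(β,α) − χ_Q(α,β)`. -/
def FinQuiver.lam (Q : FinQuiver n) (α β : Fin n → ℕ) : ℤ :=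
  Q.euler β α - Q.euler α β

/-- The polynomial ring in the variables `ω_{i,j}`, `i ∈ Q₀`, `j ∈ ℕ` (0-indexed). -/
abbrev PolyQ (n : ℕ) := MvPolynomial (Fin n × ℕ) ℚ

/-- The permutation of the variables at vertex `i` induced by a permutation of `ℕ`. -/
def vertexPerm (i : Fin n) (σ : Equiv.Perm ℕ) : Fin n × ℕ → Fin n × ℕ :=
  fun p => if p.1 = i then (i, σ p.2) else p

/-- `f` is, for each vertex `i`, symmetric in the variables `ω_{i,0},…,ω_{i,γ i − 1}`. -/
def SymmIn (γ : Fin n → ℕ) (f : PolyQ n) : Prop :=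
  ∀ (i : Fin n) (σ : Equiv.Perm ℕ),
    (∀ j : ℕ, σ j ≠ j → j < γ i) → rename (vertexPerm i σ) f = f

lemma vars_smul_subset (c : ℚ) (f : PolyQ n) : (c • f).vars ⊆ f.vars := by
  rw [MvPolynomial.smul_eq_C_mul]
  refine (MvPolynomial.vars_mul _ _).trans ?_
  simp [MvPolynomial.vars_C]

/-- `ℋ_γ`: polynomials using only the variables `ω_{i,j}`, `j < γ i`, which are
symmetric at each vertex.  A `ℚ`-submodule of `PolyQ n`. -/
noncomputable def Hspace (γ : Fin n → ℕ) : Submodule ℚ (PolyQ n) where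
  carrier := {f | (∀ p ∈ f.vars, p.2 < γ p.1) ∧ SymmIn γ f}
  add_mem' := by
    rintro f g ⟨hf1, hf2⟩ ⟨hg1, hg2⟩
    refine ⟨fun p hp => ?_, fun i σ hσ => ?_⟩
    · rcases Finset.mem_union.mp (MvPolynomial.vars_add_subset f g hp) with h | h
      exacts [hf1 p h, hg1 p h]
    · rw [map_add, hf2 i σ hσ, hg2 i σ hσ]
  zero_mem' := by
    refine ⟨fun p hp => ?_, fun i σ hσ => map_zero _⟩
    simp [MvPolynomial.vars_0] at hp
  smul_mem' := by
    rintro c f ⟨hf1, hf2⟩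
    refine ⟨fun p hp => hf1 p (vars_smul_subset c f hp), fun i σ hσ => ?_⟩
    rw [map_smul, hf2 i σ hσ]

/-- Polynomials all of whose variables sit at vertex `i`. -/
noncomputable def onlyVertex (i : Fin n) : Submodule ℚ (PolyQ n) where
  carrier := {f | ∀ p ∈ f.vars, p.1 = i}
  add_mem' := by
    intro f g hf hg p hp
    rcases Finset.mem_union.mp (MvPolynomial.vars_add_subset f g hp) with h | h
    exacts [hf p h, hg p h]
  zero_mem' := by
    intro p hp
    simp [MvPolynomial.vars_0] at hp
  smul_mem' := by
    intro c f hf p hp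
    exact hf p (vars_smul_subset c f hp)

/-- `𝒜_{β,m}`: the subspace of `ℋ_{m·β}` of polynomials depending only on the
variables `ω_{i,0},…,ω_{i,m−1}` at the distinguished vertex `i`. -/
noncomputable def Aspace (β : Fin n → ℕ) (i : Fin n) (m : ℕ) : Submodule ℚ (PolyQ n) :=
  Hspace (fun v => m * β v) ⊓ onlyVertex i

/-- Substitute for the `j`-th variable at vertex `i` the variable `ω_{i,s}` where `s`
is the `j`-th element of `T i` in increasing order. -/
noncomputable def substAlong (T : Fin n → Finset ℕ) : PolyQ n →ₐ[ℚ] PolyQ n :=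
  aeval fun p : Fin n × ℕ => X (p.1, ((T p.1).sort (· ≤ ·)).getD p.2 0)

/-- The index set of the Kontsevich–Soibelman localization sum:
for each vertex, a `γ₁ i`-element subset of `{0,…,γ₁ i + γ₂ i − 1}`. -/
def shuffles (γ₁ γ₂ : Fin n → ℕ) : Finset (Fin n → Finset ℕ) :=
  Fintype.piFinset fun i => (Finset.range (γ₁ i + γ₂ i)).powerset.filter fun s => s.card = γ₁ i

def shuffleCompl (γ₁ γ₂ : Fin n → ℕ) (S : Fin n → Finset ℕ) : Fin n → Finset ℕ :=
  fun i => Finset.range (γ₁ i + γ₂ i) \ S i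

/-- The numerator factor attached to the arrow `a`:
`∏_{j' ∈ S̄_{h a}} ∏_{j ∈ S_{t a}} (ω_{h a, j'} − ω_{t a, j})`. -/
noncomputable def arrowFactor (Q : FinQuiver n) (γ₁ γ₂ : Fin n → ℕ)
    (S : Fin n → Finset ℕ) (a : Q.Arr) : PolyQ n :=
  ∏ j' ∈ shuffleCompl γ₁ γ₂ S (Q.hd a), ∏ j ∈ S (Q.tl a),
    (X (Q.hd a, j') - X (Q.tl a, j))

noncomputable def interactionNum (Q : FinQuiver n) (γ₁ γ₂ : Fin n → ℕ)
    (S : Fin n → Finset ℕ) : PolyQ n :=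
  ∏ a : Q.Arr, arrowFactor Q γ₁ γ₂ S a

noncomputable def interactionDen (γ₁ γ₂ : Fin n → ℕ) (S : Fin n → Finset ℕ) : PolyQ n :=
  ∏ i : Fin n, ∏ j' ∈ shuffleCompl γ₁ γ₂ S i, ∏ j ∈ S i, (X (i, j') - X (i, j))

/-- The Kontsevich–Soibelman localization sum, an element of the field of rational
functions (the fraction field of `PolyQ n`). -/
noncomputable def cohaMulRat (Q : FinQuiver n) (γ₁ γ₂ : Fin n → ℕ) (f₁ f₂ : PolyQ n) :
    FractionRing (PolyQ n) :=
  ∑ S ∈ shuffles γ₁ γ₂,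
    algebraMap (PolyQ n) (FractionRing (PolyQ n))
        (substAlong S f₁ * substAlong (shuffleCompl γ₁ γ₂ S) f₂ * interactionNum Q γ₁ γ₂ S) /
      algebraMap (PolyQ n) (FractionRing (PolyQ n)) (interactionDen γ₁ γ₂ S)

/-- The CoHA product `f₁ * f₂`: the unique polynomial representing the localization
sum (and `0` if the sum were not a polynomial, which never happens). -/
noncomputable def cohaMul (Q : FinQuiver n) (γ₁ γ₂ : Fin n → ℕ) (f₁ f₂ : PolyQ n) : PolyQ n :=
  if h : ∃ P : PolyQ n,
      algebraMap (PolyQ n) (FractionRing (PolyQ n)) P = cohaMulRat Q γ₁ γ₂ f₁ f₂ then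
    h.choose
  else 0

/-- Iterated, left-to-right, CoHA product of a list of dimension-vector/polynomial pairs.
Returns the total dimension vector together with the product. -/
noncomputable def cohaProd (Q : FinQuiver n) :
    List ((Fin n → ℕ) × PolyQ n) → (Fin n → ℕ) × PolyQ n
  | [] => (fun _ => 0, 1)
  | x :: xs => xs.foldl (fun acc y => (acc.1 + y.1, cohaMul Q acc.1 y.1 acc.2 y.2)) x

/-- Left-to-right CoHA product `f 0 * f 1 * ⋯ * f (r−1)` with `f u ∈ ℋ_{γ u}`. -/
noncomputable def cohaProdFin (Q : FinQuiver n) {r : ℕ} (γ : Fin r → Fin n → ℕ)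
    (f : Fin r → PolyQ n) : PolyQ n :=
  (cohaProd Q (List.ofFn fun u => (γ u, f u))).2

/-- The quiver with one vertex and no arrows. -/
def A1 : FinQuiver 1 := { Arr := Empty, hd := Empty.elim, tl := Empty.elim }

/-- `ψ_p = x₁ ^ p ∈ ℋ₁(A₁)`. -/
noncomputable def psi (p : ℕ) : PolyQ 1 := X ((0 : Fin 1), 0) ^ p

def oneDim : Fin 1 → ℕ := fun _ => 1

/-- The simple dimension vector `e_i`. -/
def simpleDim (i : Fin n) : Fin n → ℕ := fun v => if v = i then 1 else 0

/-- A subquiver of `Q`. -/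
structure Subquiver (Q : FinQuiver n) where
  verts : Finset (Fin n)
  arrows : Finset Q.Arr
  hd_mem : ∀ a ∈ arrows, Q.hd a ∈ verts
  tl_mem : ∀ a ∈ arrows, Q.tl a ∈ verts

def Subquiver.Full {Q : FinQuiver n} (Q' : Subquiver Q) : Prop :=
  ∀ a : Q.Arr, Q.hd a ∈ Q'.verts → Q.tl a ∈ Q'.verts → a ∈ Q'.arrows

/-- Adjacency in the underlying undirected graph of a subquiver. -/
def Subquiver.Adj {Q : FinQuiver n} (Q' : Subquiver Q) (x y : Fin n) : Prop :=
  ∃ a ∈ Q'.arrows, (Q.hd a = x ∧ Q.tl a = y) ∨ (Q.hd a = y ∧ Q.tl a = x)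

def Subquiver.Connected {Q : FinQuiver n} (Q' : Subquiver Q) : Prop :=
  ∀ x ∈ Q'.verts, ∀ y ∈ Q'.verts, Relation.ReflTransGen Q'.Adj x y

/-- The Euler form of the subquiver `Q'` (on `ℤ`-valued vectors). -/
def Subquiver.eulerZ {Q : FinQuiver n} (Q' : Subquiver Q) (α β : Fin n → ℤ) : ℤ :=
  ∑ i ∈ Q'.verts, α i * β i - ∑ a ∈ Q'.arrows, α (Q.tl a) * β (Q.hd a)

/-- Positive definiteness of the Tits form of `Q'` on vectors supported on `Q'`. -/
def Subquiver.PosDefTits {Q : FinQuiver n} (Q' : Subquiver Q) : Prop :=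
  ∀ β : Fin n → ℤ, (∀ i, i ∉ Q'.verts → β i = 0) → β ≠ 0 → 0 < Q'.eulerZ β β

/-- A connected full subquiver with positive definite Tits form. -/
def Subquiver.IsDynkin {Q : FinQuiver n} (Q' : Subquiver Q) : Prop :=
  Q'.Connected ∧ Q'.Full ∧ Q'.PosDefTits

/-- A positive root of `Q'`: a nonzero dimension vector supported on `Q'` with
Tits form equal to `1`. -/
def Subquiver.IsPosRoot {Q : FinQuiver n} (Q' : Subquiver Q) (β : Fin n → ℕ) : Prop :=
  (∀ i, i ∉ Q'.verts → β i = 0) ∧ β ≠ 0 ∧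
    Q'.eulerZ (fun i => (β i : ℤ)) (fun i => (β i : ℤ)) = 1

/-- A subquiver regarded as a quiver in its own right (on the ambient vertex set). -/
def Subquiver.toQuiver {Q : FinQuiver n} (Q' : Subquiver Q) : FinQuiver n :=
  { Arr := {a : Q.Arr // a ∈ Q'.arrows}, hd := fun a => Q.hd a.1, tl := fun a => Q.tl a.1 }

/-- An (ordered list) subquiver partition `𝒬• = (Q¹,…,Q^ℓ)`: nonempty connected
subquivers whose vertex sets partition `Q₀`. -/
structure SubqPartition (Q : FinQuiver n) (ℓ : ℕ) where
  part : Fin ℓ → Subquiver Q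
  nonempty' : ∀ j, (part j).verts.Nonempty
  connected' : ∀ j, (part j).Connected
  cover : ∀ i : Fin n, ∃! j, i ∈ (part j).verts

/-- The set `𝒬•₁` of arrows belonging to one of the parts. -/
noncomputable def SubqPartition.arrs {Q : FinQuiver n} {ℓ : ℕ} (P : SubqPartition Q ℓ) : Finset Q.Arr :=
  Finset.univ.biUnion fun j => (P.part j).arrows

/-- The partition is admissible and ordered: every arrow not inside a part goes from a
later part to an earlier part (head before tail). -/
def SubqPartition.Ordered {Q : FinQuiver n} {ℓ : ℕ} (P : SubqPartition Q ℓ) : Prop :=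
  ∀ a : Q.Arr, a ∉ P.arrs → ∀ i j : Fin ℓ,
    Q.hd a ∈ (P.part i).verts → Q.tl a ∈ (P.part j).verts → i < j

/-- Every part is a Dynkin subquiver. -/
def SubqPartition.Dynkin {Q : FinQuiver n} {ℓ : ℕ} (P : SubqPartition Q ℓ) : Prop :=
  ∀ j, (P.part j).IsDynkin

/-- `β : Fin r → (Fin n → ℕ)` is a Reineke-ordered enumeration of `Φ₊(𝒬•)`, with
`blk u` the part to which `β u` belongs: block-monotone, enumerating all positive roots
without repetition, and within each block `u < v → ⟨β u, β v⟩ ≥ 0`. -/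
def IsReinekeOrder {Q : FinQuiver n} {ℓ : ℕ} (P : SubqPartition Q ℓ) {r : ℕ}
    (β : Fin r → Fin n → ℕ) (blk : Fin r → Fin ℓ) : Prop :=
  Monotone blk ∧
  (∀ u, (P.part (blk u)).IsPosRoot (β u)) ∧
  Function.Injective β ∧
  (∀ j (b : Fin n → ℕ), (P.part j).IsPosRoot b → ∃ u, β u = b) ∧
  (∀ u v : Fin r, u < v → blk u = blk v → 0 ≤ Q.lam (β u) (β v))

open scoped TensorProduct DirectSum

/-!
Since every arrow between two parts points from the later part to the earlier one, no arrow goes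
from the support of a class of an earlier part to that of a later one. In the product of two such
classes the localization sum therefore has a single term, whose numerator and denominator are
empty products: `g₁ * ⋯ * g_ℓ` is the ordinary product of polynomials in disjoint sets of variables.
A dimension vector is the sum of its restrictions `γ^j` to the parts, and multiplication
`ℋ_{γ¹} ⊗ ⋯ ⊗ ℋ_{γ^ℓ} → ℋ_γ` is inverted by splitting a polynomial into tensors according to the
part of each variable and then symmetrizing each tensor factor with its Reynolds operator.
-/

section SplitVars

variable {R σ ι S : Type*} [CommSemiring R] [CommSemiring S] [Algebra R S]

lemma algHom_eqOn_supported {φ ψ : MvPolynomial σ R →ₐ[R] S} {s : Set σ}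
    (h : ∀ p ∈ s, φ (X p) = ψ (X p)) : Set.EqOn φ ψ (supported R s) :=
  AlgHom.eqOn_adjoin_iff.mpr (Set.forall_mem_image.mpr h)

section Multiplication

variable [Fintype ι]

/-- The algebra homomorphism `⨂_{j ∈ ι} R[σ] → S` given by multiplying the images of the tensor
factors under the homomorphisms `k j`. -/
noncomputable def mulTensorHom (k : ι → MvPolynomial σ R →ₐ[R] S) :
    (⨂[R] _ : ι, MvPolynomial σ R) →ₐ[R] S :=
  PiTensorProduct.liftAlgHom
    ((MultilinearMap.mkPiAlgebra R ι S).compLinearMap fun j => (k j).toLinearMap)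
    (Finset.prod_eq_one fun j _ => map_one (k j))
    (fun x y => by simp [Finset.prod_mul_distrib])

lemma mulTensorHom_tprod (k : ι → MvPolynomial σ R →ₐ[R] S) (f : ι → MvPolynomial σ R) :
    mulTensorHom k (PiTensorProduct.tprod R f) = ∏ j, k j (f j) :=
  PiTensorProduct.lift.tprod f

end Multiplication

variable [DecidableEq ι]

variable (R) in
/-- The algebra homomorphism `R[σ] → ⨂_{j ∈ ι} R[σ]` sending the variable `p` to `p` placed in the
tensor factor `c p`. It inverts multiplication on products of polynomials in disjoint sets of
variables. -/
noncomputable def splitVars (c : σ → ι) :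
    MvPolynomial σ R →ₐ[R] ⨂[R] _ : ι, MvPolynomial σ R :=
  aeval fun p =>
    PiTensorProduct.singleAlgHom (R := R) (A := fun _ => MvPolynomial σ R) (c p) (X p)

lemma splitVars_X (c : σ → ι) (p : σ) :
    splitVars R c (X p) = PiTensorProduct.tprod R (Pi.mulSingle (c p) (X p)) :=
  aeval_X _ _

lemma splitVars_eq_tprod_mulSingle (c : σ → ι) (j : ι) {f : MvPolynomial σ R}
    (hf : f ∈ supported R (c ⁻¹' {j})) :
    splitVars R c f = PiTensorProduct.tprod R (Pi.mulSingle j f) := by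
  refine algHom_eqOn_supported
    (ψ := PiTensorProduct.singleAlgHom (R := R) (A := fun _ => MvPolynomial σ R) j)
    (fun p hp => ?_) hf
  obtain rfl : c p = j := hp
  exact splitVars_X c p

variable [Fintype ι]

lemma splitVars_prod (c : σ → ι) (f : ι → MvPolynomial σ R)
    (hf : ∀ j, f j ∈ supported R (c ⁻¹' {j})) :
    splitVars R c (∏ j, f j) = PiTensorProduct.tprod R f := by
  calc splitVars R c (∏ j, f j) = ∏ j, PiTensorProduct.tprod R (Pi.mulSingle j (f j)) := by
        rw [map_prod]
        exact Finset.prod_congr rfl fun j _ => splitVars_eq_tprod_mulSingle c j (hf j)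
    _ = PiTensorProduct.tprod R f := by
        rw [← PiTensorProduct.tprod_prod, Finset.univ_prod_mulSingle]

lemma mulTensorHom_splitVars (c : σ → ι) (k : ι → MvPolynomial σ R →ₐ[R] S)
    (f : MvPolynomial σ R) :
    mulTensorHom k (splitVars R c f) = aeval (fun p => k (c p) (X p)) f := by
  suffices (mulTensorHom k).comp (splitVars R c) = aeval fun p => k (c p) (X p) from
    DFunLike.congr_fun this f
  ext p
  rw [AlgHom.comp_apply, splitVars_X, mulTensorHom_tprod, aeval_X,
    Fintype.prod_eq_single (c p) fun j hj => by rw [Pi.mulSingle_eq_of_ne hj, map_one],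
    Pi.mulSingle_eq_same]

end SplitVars

section Reynolds

/-- The set of variables `ω_{i,j}`, `j < γ i`, on which the elements of `ℋ_γ` depend. -/
def dimVars (γ : Fin n → ℕ) : Set (Fin n × ℕ) :=
  {p | p.2 < γ p.1}

lemma mem_supported_dimVars {γ : Fin n → ℕ} {f : PolyQ n} (hf : f ∈ Hspace γ) :
    f ∈ supported ℚ (dimVars γ) :=
  mem_supported.mpr hf.1

lemma SymmIn.rename_prodShear {γ : Fin n → ℕ} {f : PolyQ n} (hf : SymmIn γ f)
    (π : Fin n → Equiv.Perm ℕ) (hπ : ∀ i j, π i j ≠ j → j < γ i) :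
    rename (Equiv.prodShear (Equiv.refl _) π) f = f := by
  suffices h : ∀ s : Finset (Fin n),
      rename (Equiv.prodShear (Equiv.refl _) (s.piecewise π 1)) f = f by
    simpa using h Finset.univ
  intro s
  induction s using Finset.induction_on with
  | empty => exact rename_id_apply f
  | insert i s hi ih =>
    have insert_eq_comp : ⇑(Equiv.prodShear (Equiv.refl _) ((insert i s).piecewise π 1)) =
        vertexPerm i (π i) ∘ Equiv.prodShear (Equiv.refl _) (s.piecewise π 1) := by
      funext ⟨k, x⟩
      by_cases hk : k = i
      · subst hk; simp [vertexPerm, hi]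
      · simp [vertexPerm, hk, Finset.piecewise_insert_of_ne]
    rw [insert_eq_comp, ← rename_rename, ih, hf i (π i) (hπ i)]

/-- The group `∏_i S_{γ(i)}` of permutations of the variables of `ℋ_γ`: the Weyl group of
`∏_i GL_{γ(i)}`. -/
abbrev WeylGroup (γ : Fin n → ℕ) : Type :=
  ∀ i, Equiv.Perm (Finset.range (γ i))

namespace WeylGroup

variable {γ : Fin n → ℕ}

/-- The action of `WeylGroup γ` on all variables at the vertices, fixing `ω_{i,j}` for
`j ≥ γ i`. -/
noncomputable def permVars (g : WeylGroup γ) : Fin n → Equiv.Perm ℕ :=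
  fun i => Equiv.Perm.ofSubtype (g i)

lemma lt_of_permVars_ne (g : WeylGroup γ) (i : Fin n) (j : ℕ) (h : g.permVars i j ≠ j) :
    j < γ i := by
  by_contra hj
  exact h (Equiv.Perm.ofSubtype_apply_of_not_mem _ (by simpa using hj))

lemma permVars_lt_iff (g : WeylGroup γ) (i : Fin n) (j : ℕ) : g.permVars i j < γ i ↔ j < γ i := by
  simpa only [Finset.mem_range, permVars] using Equiv.Perm.ofSubtype_apply_mem_iff_mem (g i) j

lemma exists_permVars_eq_mulSingle (i : Fin n) (π : Equiv.Perm ℕ) (hπ : ∀ j, π j ≠ j → j < γ i) :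
    ∃ g : WeylGroup γ, g.permVars = Pi.mulSingle i π := by
  have moved_mem : ∀ j, π j ≠ j → j ∈ Finset.range (γ i) :=
    fun j hj => Finset.mem_range.mpr (hπ j hj)
  have map_mem_iff : ∀ j, π j ∈ Finset.range (γ i) ↔ j ∈ Finset.range (γ i) := by
    intro j
    by_cases hj : π j = j
    · rw [hj]
    · exact iff_of_true (moved_mem _ fun h => hj (π.injective h)) (moved_mem j hj)
  refine ⟨Pi.mulSingle i (π.subtypePerm map_mem_iff), funext fun k => ?_⟩
  by_cases hk : k = i
  · subst hk
    simp [permVars, Equiv.Perm.ofSubtype_subtypePerm map_mem_iff moved_mem]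
  · simp [permVars, hk]

/-- The substitution permuting the variables of `ℋ_γ` by `g` and killing all other variables. -/
noncomputable def subst (g : WeylGroup γ) : PolyQ n →ₐ[ℚ] PolyQ n :=
  aeval fun p => if p ∈ dimVars γ then X (p.1, g.permVars p.1 p.2) else 0

lemma subst_X_of_mem (g : WeylGroup γ) {p : Fin n × ℕ} (hp : p ∈ dimVars γ) :
    g.subst (X p) = X (p.1, g.permVars p.1 p.2) := by
  rw [subst, aeval_X, if_pos hp]

lemma subst_X_of_notMem (g : WeylGroup γ) {p : Fin n × ℕ} (hp : p ∉ dimVars γ) :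
    g.subst (X p) = 0 := by
  rw [subst, aeval_X, if_neg hp]

lemma subst_mem_supported (g : WeylGroup γ) (f : PolyQ n) :
    g.subst f ∈ supported ℚ (dimVars γ) := by
  suffices g.subst.range ≤ supported ℚ (dimVars γ) from this ⟨f, rfl⟩
  rw [subst, ← Algebra.adjoin_range_eq_range_aeval, Algebra.adjoin_le_iff]
  rintro _ ⟨p, rfl⟩
  dsimp only
  split_ifs with hp
  · exact X_mem_supported.mpr ((g.permVars_lt_iff p.1 p.2).mpr hp)
  · exact Subalgebra.zero_mem _

lemma subst_eq_self (g : WeylGroup γ) {f : PolyQ n} (hf : f ∈ Hspace γ) : g.subst f = f := by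
  have subst_eq_rename : g.subst f = rename (Equiv.prodShear (Equiv.refl _) g.permVars) f :=
    algHom_eqOn_supported
      (fun p hp => by rw [g.subst_X_of_mem hp, rename_X]; rfl) (mem_supported_dimVars hf)
  rw [subst_eq_rename, hf.2.rename_prodShear _ g.lt_of_permVars_ne]

lemma rename_vertexPerm_subst {i : Fin n} {π : Equiv.Perm ℕ} {τ : WeylGroup γ}
    (hτ : τ.permVars = Pi.mulSingle i π) (g : WeylGroup γ) (f : PolyQ n) :
    rename (vertexPerm i π) (g.subst f) = (τ * g).subst f := by
  suffices (rename (vertexPerm i π)).comp g.subst = (τ * g).subst from DFunLike.congr_fun this f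
  ext1 p
  have permVars_mul : (τ * g).permVars p.1 = τ.permVars p.1 * g.permVars p.1 := map_mul _ _ _
  rw [AlgHom.comp_apply]
  by_cases hp : p ∈ dimVars γ
  · rw [subst_X_of_mem g hp, subst_X_of_mem _ hp, rename_X, permVars_mul, hτ]
    by_cases hi : p.1 = i
    · simp [vertexPerm, hi]
    · simp [vertexPerm, hi]
  · rw [subst_X_of_notMem g hp, subst_X_of_notMem _ hp, map_zero]

end WeylGroup

lemma sum_weylGroup_subst_mem_Hspace (γ : Fin n → ℕ) (f : PolyQ n) :
    ∑ g : WeylGroup γ, g.subst f ∈ Hspace γ := by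
  refine ⟨mem_supported.mp (Subalgebra.sum_mem _ fun g _ => g.subst_mem_supported f),
    fun i π hπ => ?_⟩
  obtain ⟨τ, hτ⟩ := WeylGroup.exists_permVars_eq_mulSingle i π hπ
  calc rename (vertexPerm i π) (∑ g : WeylGroup γ, g.subst f)
      = ∑ g : WeylGroup γ, (τ * g).subst f := by
        rw [map_sum]
        exact Finset.sum_congr rfl fun g _ => WeylGroup.rename_vertexPerm_subst hτ g f
    _ = ∑ g : WeylGroup γ, g.subst f :=
        Equiv.sum_comp (Equiv.mulLeft τ) fun g : WeylGroup γ => g.subst f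

/-- The Reynolds operator: the projection of the polynomial ring onto `ℋ_γ` that kills the variables
outside `ℋ_γ` and averages over the Weyl group. -/
noncomputable def reynolds (γ : Fin n → ℕ) : PolyQ n →ₗ[ℚ] Hspace γ :=
  LinearMap.codRestrict (Hspace γ)
    ((Fintype.card (WeylGroup γ) : ℚ)⁻¹ • ∑ g : WeylGroup γ, g.subst.toLinearMap)
    fun f => by
      simpa using (Hspace γ).smul_mem _ (sum_weylGroup_subst_mem_Hspace γ f)

lemma coe_reynolds (γ : Fin n → ℕ) (f : PolyQ n) :
    (reynolds γ f : PolyQ n) =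
      (Fintype.card (WeylGroup γ) : ℚ)⁻¹ • ∑ g : WeylGroup γ, g.subst f := by
  simp [reynolds]

lemma reynolds_coe {γ : Fin n → ℕ} (f : Hspace γ) : reynolds γ f = f := by
  have card_ne_zero : (Fintype.card (WeylGroup γ) : ℚ) ≠ 0 :=
    Nat.cast_ne_zero.mpr Fintype.card_ne_zero
  ext1
  rw [coe_reynolds, Finset.sum_congr rfl fun g _ => WeylGroup.subst_eq_self g f.2, Finset.sum_const,
    Finset.card_univ, ← Nat.cast_smul_eq_nsmul ℚ, inv_smul_smul₀ card_ne_zero]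

end Reynolds

section TensorDecomposition

variable {ι : Type*} {c : Fin n → ι} {γ : ι → Fin n → ℕ}

lemma mem_supported_preimage_singleton (hγ : ∀ j i, c i ≠ j → γ j i = 0) (j : ι) {f : PolyQ n}
    (hf : f ∈ Hspace (γ j)) :
    f ∈ supported ℚ ((fun p : Fin n × ℕ => c p.1) ⁻¹' {j}) := by
  refine supported_mono (fun p hp => ?_) (mem_supported_dimVars hf)
  by_contra hj
  exact Nat.not_lt_zero _ (hγ j p.1 hj ▸ hp : p.2 < 0)

lemma rename_vertexPerm_eq_self {α : Fin n → ℕ} {f : PolyQ n} (hf : f ∈ Hspace α) {i : Fin n}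
    (hi : α i = 0) (π : Equiv.Perm ℕ) : rename (vertexPerm i π) f = f := by
  refine algHom_eqOn_supported (ψ := AlgHom.id ℚ _) (fun p hp => ?_) (mem_supported_dimVars hf)
  have hpi : p.1 ≠ i := by
    rintro rfl
    exact Nat.not_lt_zero _ (hi ▸ hp : p.2 < 0)
  rw [rename_X, vertexPerm, if_neg hpi, AlgHom.id_apply]

variable [Fintype ι]

lemma sum_eq_apply_of_support (hγ : ∀ j i, c i ≠ j → γ j i = 0) (v : Fin n) :
    ∑ j, γ j v = γ (c v) v :=
  Fintype.sum_eq_single (c v) fun j hj => hγ j v hj.symm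

lemma prod_mem_Hspace (hγ : ∀ j i, c i ≠ j → γ j i = 0) {f : ι → PolyQ n}
    (hf : ∀ j, f j ∈ Hspace (γ j)) : ∏ j, f j ∈ Hspace fun v => ∑ j, γ j v := by
  refine ⟨mem_supported.mp (Subalgebra.prod_mem _ fun j _ => ?_), fun i π hπ => ?_⟩
  · refine supported_mono (fun p hp => ?_) (mem_supported_dimVars (hf j))
    exact hp.trans_le (Finset.single_le_sum (f := fun k => γ k p.1)
      (fun _ _ => Nat.zero_le _) (Finset.mem_univ j))
  · rw [map_prod]
    refine Finset.prod_congr rfl fun j _ => ?_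
    by_cases hj : c i = j
    · subst hj
      exact (hf (c i)).2 i π fun k hk => sum_eq_apply_of_support hγ i ▸ hπ k hk
    · exact rename_vertexPerm_eq_self (hf j) (hγ j i hj) π

/-- Multiplication of polynomials as a multilinear map `∏_j ℋ_{γ^j} → ℋ_{∑_j γ^j}`, for dimension
vectors `γ^j` supported on the fibres of `c`. -/
noncomputable def mulHspace (hγ : ∀ j i, c i ≠ j → γ j i = 0) :
    MultilinearMap ℚ (fun j => Hspace (γ j)) (Hspace fun v => ∑ j, γ j v) :=
  ((MultilinearMap.mkPiAlgebra ℚ ι (PolyQ n)).compLinearMap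
    fun j => (Hspace (γ j)).subtype).codRestrict _ fun g => prod_mem_Hspace hγ fun j => (g j).2

lemma coe_mulHspace (hγ : ∀ j i, c i ≠ j → γ j i = 0) (g : ∀ j, Hspace (γ j)) :
    (mulHspace hγ g : PolyQ n) = ∏ j, (g j : PolyQ n) :=
  rfl

variable [DecidableEq ι]

lemma map_reynolds_splitVars_mulHspace (hγ : ∀ j i, c i ≠ j → γ j i = 0)
    (t : ⨂[ℚ] j, Hspace (γ j)) :
    PiTensorProduct.map (fun j => reynolds (γ j))
      (splitVars ℚ (fun p : Fin n × ℕ => c p.1) (PiTensorProduct.lift (mulHspace hγ) t)) = t := by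
  suffices PiTensorProduct.map (fun j => reynolds (γ j)) ∘ₗ
      (splitVars ℚ fun p : Fin n × ℕ => c p.1).toLinearMap ∘ₗ (Hspace _).subtype ∘ₗ
        PiTensorProduct.lift (mulHspace hγ) = LinearMap.id from DFunLike.congr_fun this t
  ext g
  simp only [LinearMap.compMultilinearMap_apply, LinearMap.comp_apply, PiTensorProduct.lift.tprod,
    Submodule.subtype_apply, AlgHom.toLinearMap_apply, coe_mulHspace, LinearMap.id_apply]
  rw [splitVars_prod _ _ fun j => mem_supported_preimage_singleton hγ j (g j).2,
    PiTensorProduct.map_tprod]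
  simp only [reynolds_coe]

lemma coe_mulHspace_map_reynolds (hγ : ∀ j i, c i ≠ j → γ j i = 0)
    (t : ⨂[ℚ] _ : ι, PolyQ n) :
    (PiTensorProduct.lift (mulHspace hγ) (PiTensorProduct.map (fun j => reynolds (γ j)) t) :
        PolyQ n) =
      (Fintype.card (∀ j, WeylGroup (γ j)) : ℚ)⁻¹ •
        ∑ h : ∀ j, WeylGroup (γ j), mulTensorHom (fun j => (h j).subst) t := by
  suffices (Hspace _).subtype ∘ₗ PiTensorProduct.lift (mulHspace hγ) ∘ₗ
      PiTensorProduct.map (fun j => reynolds (γ j)) =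
        (Fintype.card (∀ j, WeylGroup (γ j)) : ℚ)⁻¹ • ∑ h : ∀ j, WeylGroup (γ j),
          (mulTensorHom fun j => (h j).subst).toLinearMap by
    simpa using DFunLike.congr_fun this t
  ext1
  ext1 f
  simp only [LinearMap.compMultilinearMap_apply, LinearMap.comp_apply, PiTensorProduct.map_tprod,
    PiTensorProduct.lift.tprod, Submodule.subtype_apply, coe_mulHspace, coe_reynolds,
    LinearMap.smul_apply, LinearMap.sum_apply, AlgHom.toLinearMap_apply, mulTensorHom_tprod]
  rw [Finset.prod_smul, Finset.prod_inv_distrib, Fintype.card_pi, Nat.cast_prod,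
    Finset.prod_univ_sum, Fintype.piFinset_univ]

lemma mulTensorHom_subst_splitVars (hγ : ∀ j i, c i ≠ j → γ j i = 0)
    (h : ∀ j, WeylGroup (γ j)) {f : PolyQ n} (hf : f ∈ Hspace fun v => ∑ j, γ j v) :
    mulTensorHom (fun j => (h j).subst) (splitVars ℚ (fun p : Fin n × ℕ => c p.1) f) = f := by
  have lt_sum_iff : ∀ i k, k < ∑ j, γ j i ↔ k < γ (c i) i :=
    fun i k => by rw [sum_eq_apply_of_support hγ]
  calc mulTensorHom (fun j => (h j).subst) (splitVars ℚ (fun p : Fin n × ℕ => c p.1) f)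
      = aeval (fun p : Fin n × ℕ => (h (c p.1)).subst (X p)) f := mulTensorHom_splitVars _ _ f
    _ = rename (Equiv.prodShear (Equiv.refl _) fun i => (h (c i)).permVars i) f := by
        refine algHom_eqOn_supported (fun p hp => ?_) (mem_supported_dimVars hf)
        rw [aeval_X, WeylGroup.subst_X_of_mem _ ((lt_sum_iff p.1 p.2).mp hp), rename_X]
        rfl
    _ = f := hf.2.rename_prodShear _ fun i k hk =>
        (lt_sum_iff i k).mpr ((h (c i)).lt_of_permVars_ne i k hk)

lemma mulHspace_map_reynolds_splitVars (hγ : ∀ j i, c i ≠ j → γ j i = 0)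
    (f : Hspace fun v => ∑ j, γ j v) :
    PiTensorProduct.lift (mulHspace hγ) (PiTensorProduct.map (fun j => reynolds (γ j))
      (splitVars ℚ (fun p : Fin n × ℕ => c p.1) f)) = f := by
  have card_ne_zero : (Fintype.card (∀ j, WeylGroup (γ j)) : ℚ) ≠ 0 :=
    Nat.cast_ne_zero.mpr Fintype.card_ne_zero
  ext1
  rw [coe_mulHspace_map_reynolds,
    Finset.sum_congr rfl fun h _ => mulTensorHom_subst_splitVars hγ h f.2, Finset.sum_const,
    Finset.card_univ, ← Nat.cast_smul_eq_nsmul ℚ, inv_smul_smul₀ card_ne_zero]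

/-- The isomorphism `⨂_j ℋ_{γ^j} ≃ ℋ_{∑_j γ^j}` given by multiplication of polynomials, for
dimension vectors `γ^j` supported on the fibres of `c`. Its inverse splits the variables according
to `c` and symmetrizes each tensor factor. -/
noncomputable def mulHspaceEquiv (hγ : ∀ j i, c i ≠ j → γ j i = 0) :
    (⨂[ℚ] j, Hspace (γ j)) ≃ₗ[ℚ] Hspace fun v => ∑ j, γ j v :=
  .ofLinearMap (PiTensorProduct.lift (mulHspace hγ))
    (PiTensorProduct.map (fun j => reynolds (γ j)) ∘ₗ
      (splitVars ℚ fun p : Fin n × ℕ => c p.1).toLinearMap ∘ₗ (Hspace _).subtype)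
    (LinearMap.ext (mulHspace_map_reynolds_splitVars hγ))
    (LinearMap.ext (map_reynolds_splitVars_mulHspace hγ))

lemma coe_mulHspaceEquiv_tprod (hγ : ∀ j i, c i ≠ j → γ j i = 0) (g : ∀ j, Hspace (γ j)) :
    (mulHspaceEquiv hγ (PiTensorProduct.tprod ℚ g) : PolyQ n) = ∏ j, (g j : PolyQ n) :=
  congrArg Subtype.val (PiTensorProduct.lift.tprod g)

end TensorDecomposition

section CohaProduct

variable {Q : FinQuiver n} {γ γ₁ γ₂ : Fin n → ℕ} {S : Fin n → Finset ℕ} {f₁ f₂ : PolyQ n}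

lemma mem_shuffles :
    S ∈ shuffles γ₁ γ₂ ↔ ∀ i, S i ⊆ Finset.range (γ₁ i + γ₂ i) ∧ (S i).card = γ₁ i := by
  simp only [shuffles, Fintype.mem_piFinset, Finset.mem_filter, Finset.mem_powerset]

lemma eq_empty_of_mem_shuffles (hS : S ∈ shuffles γ₁ γ₂) {i : Fin n} (hi : γ₁ i = 0) : S i = ∅ :=
  Finset.card_eq_zero.mp ((mem_shuffles.mp hS i).2.trans hi)

lemma eq_range_of_mem_shuffles (hS : S ∈ shuffles γ₁ γ₂) {i : Fin n} (hi : γ₂ i = 0) :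
    S i = Finset.range (γ₁ i) := by
  obtain ⟨S_subset, card_S⟩ := mem_shuffles.mp hS i
  rw [hi, add_zero] at S_subset
  exact Finset.eq_of_subset_of_card_le S_subset (by rw [Finset.card_range, card_S])

lemma shuffleCompl_eq_empty_of_mem_shuffles (hS : S ∈ shuffles γ₁ γ₂) {i : Fin n}
    (hi : γ₂ i = 0) : shuffleCompl γ₁ γ₂ S i = ∅ := by
  rw [shuffleCompl, eq_range_of_mem_shuffles hS hi, hi, add_zero, Finset.sdiff_self]

lemma shuffleCompl_eq_range_of_mem_shuffles (hS : S ∈ shuffles γ₁ γ₂) {i : Fin n}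
    (hi : γ₁ i = 0) : shuffleCompl γ₁ γ₂ S i = Finset.range (γ₂ i) := by
  rw [shuffleCompl, eq_empty_of_mem_shuffles hS hi, hi, zero_add, Finset.sdiff_empty]

lemma prod_shuffleCompl_prod_eq_one (hS : S ∈ shuffles γ₁ γ₂) {i k : Fin n}
    (h : γ₂ i = 0 ∨ γ₁ k = 0) (w : ℕ → ℕ → PolyQ n) :
    ∏ j' ∈ shuffleCompl γ₁ γ₂ S i, ∏ j ∈ S k, w j' j = 1 := by
  rcases h with hi | hk
  · rw [shuffleCompl_eq_empty_of_mem_shuffles hS hi, Finset.prod_empty]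
  · rw [eq_empty_of_mem_shuffles hS hk]
    exact Finset.prod_eq_one fun _ _ => Finset.prod_empty

lemma substAlong_eq_self {T : Fin n → Finset ℕ} (hT : ∀ i, γ i ≠ 0 → T i = Finset.range (γ i))
    {f : PolyQ n} (hf : f ∈ supported ℚ (dimVars γ)) : substAlong T f = f := by
  refine algHom_eqOn_supported (ψ := AlgHom.id ℚ _) (fun p hp => ?_) hf
  have hp' : p.2 < γ p.1 := hp
  rw [substAlong, aeval_X, hT p.1 (Nat.ne_zero_of_lt hp'), Finset.sort_range,
    List.getD_eq_getElem _ _ (by rwa [List.length_range]), List.getElem_range, AlgHom.id_apply]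

lemma cohaMul_eq_of_algebraMap_eq {f : PolyQ n}
    (h : algebraMap (PolyQ n) (FractionRing (PolyQ n)) f = cohaMulRat Q γ₁ γ₂ f₁ f₂) :
    cohaMul Q γ₁ γ₂ f₁ f₂ = f := by
  have exists_poly : ∃ P : PolyQ n,
      algebraMap (PolyQ n) (FractionRing (PolyQ n)) P = cohaMulRat Q γ₁ γ₂ f₁ f₂ := ⟨f, h⟩
  rw [cohaMul, dif_pos exists_poly]
  exact IsFractionRing.injective (PolyQ n) _ (exists_poly.choose_spec.trans h.symm)

/-- The dimension vectors `γ₁`, `γ₂` have disjoint supports and no arrow of `Q` goes from the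
support of `γ₁` to the support of `γ₂`, so that the localization sum for `ℋ_{γ₁} * ℋ_{γ₂}` has a
single term with no interaction factors. -/
def NonInteracting (Q : FinQuiver n) (γ₁ γ₂ : Fin n → ℕ) : Prop :=
  (∀ i, γ₁ i = 0 ∨ γ₂ i = 0) ∧ ∀ a : Q.Arr, γ₂ (Q.hd a) = 0 ∨ γ₁ (Q.tl a) = 0

namespace NonInteracting

lemma add_left {γ₃ : Fin n → ℕ} (h₁ : NonInteracting Q γ₁ γ₃) (h₂ : NonInteracting Q γ₂ γ₃) :
    NonInteracting Q (γ₁ + γ₂) γ₃ := by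
  refine ⟨fun i => ?_, fun a => ?_⟩
  · have := h₁.1 i
    have := h₂.1 i
    rw [Pi.add_apply]
    lia
  · have := h₁.2 a
    have := h₂.2 a
    rw [Pi.add_apply]
    lia

lemma shuffles_eq_singleton (h : NonInteracting Q γ₁ γ₂) :
    shuffles γ₁ γ₂ = {fun i => Finset.range (γ₁ i)} := by
  refine Finset.eq_singleton_iff_unique_mem.mpr ⟨mem_shuffles.mpr fun i => ?_, fun S hS => ?_⟩
  · exact ⟨Finset.range_mono (Nat.le_add_right _ _), Finset.card_range _⟩
  · funext i
    rcases h.1 i with hi | hi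
    · rw [eq_empty_of_mem_shuffles hS hi, hi, Finset.range_zero]
    · exact eq_range_of_mem_shuffles hS hi

lemma interactionNum_eq_one (h : NonInteracting Q γ₁ γ₂) (hS : S ∈ shuffles γ₁ γ₂) :
    interactionNum Q γ₁ γ₂ S = 1 :=
  Finset.prod_eq_one fun a _ => prod_shuffleCompl_prod_eq_one hS (h.2 a) _

lemma interactionDen_eq_one (h : NonInteracting Q γ₁ γ₂) (hS : S ∈ shuffles γ₁ γ₂) :
    interactionDen γ₁ γ₂ S = 1 :=
  Finset.prod_eq_one fun i _ => prod_shuffleCompl_prod_eq_one hS (h.1 i).symm _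

lemma cohaMul_eq_mul (h : NonInteracting Q γ₁ γ₂) (hf₁ : f₁ ∈ supported ℚ (dimVars γ₁))
    (hf₂ : f₂ ∈ supported ℚ (dimVars γ₂)) : cohaMul Q γ₁ γ₂ f₁ f₂ = f₁ * f₂ := by
  have range_mem : (fun i => Finset.range (γ₁ i)) ∈ shuffles γ₁ γ₂ := by
    rw [h.shuffles_eq_singleton, Finset.mem_singleton]
  have compl_eq_range : ∀ i, γ₂ i ≠ 0 →
      shuffleCompl γ₁ γ₂ (fun i => Finset.range (γ₁ i)) i = Finset.range (γ₂ i) := fun i hi =>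
    shuffleCompl_eq_range_of_mem_shuffles range_mem ((h.1 i).resolve_right hi)
  refine cohaMul_eq_of_algebraMap_eq ?_
  rw [cohaMulRat, h.shuffles_eq_singleton, Finset.sum_singleton, h.interactionNum_eq_one range_mem,
    h.interactionDen_eq_one range_mem, substAlong_eq_self (fun _ _ => rfl) hf₁,
    substAlong_eq_self compl_eq_range hf₂, mul_one, map_one, div_one]

end NonInteracting

lemma mul_mem_supported_dimVars_add (hf₁ : f₁ ∈ supported ℚ (dimVars γ₁))
    (hf₂ : f₂ ∈ supported ℚ (dimVars γ₂)) : f₁ * f₂ ∈ supported ℚ (dimVars (γ₁ + γ₂)) :=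
  Subalgebra.mul_mem _
    (supported_mono (fun _ hp => Nat.lt_add_right _ hp) hf₁)
    (supported_mono (fun _ hp => Nat.lt_add_left _ hp) hf₂)

lemma cohaProd_cons_snd_eq_prod (xs : List ((Fin n → ℕ) × PolyQ n)) (x : (Fin n → ℕ) × PolyQ n)
    (hsupp : ∀ y ∈ x :: xs, y.2 ∈ supported ℚ (dimVars y.1))
    (hpair : (x :: xs).Pairwise fun y z => NonInteracting Q y.1 z.1) :
    (cohaProd Q (x :: xs)).2 = ((x :: xs).map Prod.snd).prod := by
  induction xs generalizing x with
  | nil => simp [cohaProd]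
  | cons y ys ih =>
    simp only [List.forall_mem_cons, List.pairwise_cons] at hsupp hpair ih
    obtain ⟨hx, hy, hys⟩ := hsupp
    obtain ⟨⟨hxy, hxys⟩, hyys, hpair_ys⟩ := hpair
    calc (cohaProd Q (x :: y :: ys)).2 = (cohaProd Q ((x.1 + y.1, x.2 * y.2) :: ys)).2 := by
          simp only [cohaProd, List.foldl_cons, hxy.cohaMul_eq_mul hx hy]
      _ = (((x.1 + y.1, x.2 * y.2) :: ys).map Prod.snd).prod :=
          ih _ ⟨mul_mem_supported_dimVars_add hx hy, hys⟩
            ⟨fun z hz => (hxys z hz).add_left (hyys z hz), hpair_ys⟩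
      _ = ((x :: y :: ys).map Prod.snd).prod := by
          simp only [List.map_cons, List.prod_cons, mul_assoc]

lemma cohaProd_snd_eq_prod (xs : List ((Fin n → ℕ) × PolyQ n))
    (hsupp : ∀ x ∈ xs, x.2 ∈ supported ℚ (dimVars x.1))
    (hpair : xs.Pairwise fun x y => NonInteracting Q x.1 y.1) :
    (cohaProd Q xs).2 = (xs.map Prod.snd).prod := by
  cases xs with
  | nil => rfl
  | cons x xs => exact cohaProd_cons_snd_eq_prod xs x hsupp hpair

lemma cohaProdFin_eq_prod {r : ℕ} {γ : Fin r → Fin n → ℕ} {f : Fin r → PolyQ n}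
    (hf : ∀ j, f j ∈ supported ℚ (dimVars (γ j)))
    (hγ : ∀ j k, j < k → NonInteracting Q (γ j) (γ k)) : cohaProdFin Q γ f = ∏ j, f j := by
  rw [cohaProdFin, cohaProd_snd_eq_prod, List.map_ofFn, List.prod_ofFn]
  · rfl
  · exact List.forall_mem_ofFn_iff.mpr hf
  · exact List.pairwise_ofFn.mpr fun j k => hγ j k

lemma interactionNum_toQuiver {Q' : Subquiver Q} (hQ' : Q'.Full)
    (hγ₁ : ∀ i, i ∉ Q'.verts → γ₁ i = 0) (hγ₂ : ∀ i, i ∉ Q'.verts → γ₂ i = 0)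
    (hS : S ∈ shuffles γ₁ γ₂) :
    interactionNum Q'.toQuiver γ₁ γ₂ S = interactionNum Q γ₁ γ₂ S := by
  have arrowFactor_eq_one : ∀ a ∉ Q'.arrows, arrowFactor Q γ₁ γ₂ S a = 1 := fun a ha =>
    prod_shuffleCompl_prod_eq_one hS
      ((not_and_or.mp fun h => ha (hQ' a h.1 h.2)).imp (hγ₂ _) (hγ₁ _)) _
  calc interactionNum Q'.toQuiver γ₁ γ₂ S = ∏ a ∈ Q'.arrows, arrowFactor Q γ₁ γ₂ S a :=
        Finset.prod_coe_sort Q'.arrows (arrowFactor Q γ₁ γ₂ S)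
    _ = interactionNum Q γ₁ γ₂ S :=
        Finset.prod_subset (Finset.subset_univ _) fun a _ => arrowFactor_eq_one a

lemma cohaMul_toQuiver {Q' : Subquiver Q} (hQ' : Q'.Full)
    (hγ₁ : ∀ i, i ∉ Q'.verts → γ₁ i = 0) (hγ₂ : ∀ i, i ∉ Q'.verts → γ₂ i = 0) (f₁ f₂ : PolyQ n) :
    cohaMul Q'.toQuiver γ₁ γ₂ f₁ f₂ = cohaMul Q γ₁ γ₂ f₁ f₂ := by
  have cohaMulRat_eq : cohaMulRat Q'.toQuiver γ₁ γ₂ f₁ f₂ = cohaMulRat Q γ₁ γ₂ f₁ f₂ :=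
    Finset.sum_congr rfl fun S hS => by rw [interactionNum_toQuiver hQ' hγ₁ hγ₂ hS]
  rw [cohaMul, cohaMul, cohaMulRat_eq]

end CohaProduct

namespace SubqPartition

variable {ℓ : ℕ} {Q : FinQuiver n} (P : SubqPartition Q ℓ)

/-- The index of the part containing the vertex `i`. -/
noncomputable def partOf (i : Fin n) : Fin ℓ :=
  (P.cover i).choose

lemma mem_verts_iff {i : Fin n} {j : Fin ℓ} : i ∈ (P.part j).verts ↔ P.partOf i = j := by
  obtain ⟨partOf_mem, eq_partOf⟩ := (P.cover i).choose_spec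
  exact ⟨fun h => (eq_partOf j h).symm, fun h => h ▸ partOf_mem⟩

variable {P} in
lemma Ordered.full (hP : P.Ordered) (j : Fin ℓ) : (P.part j).Full := by
  intro a ha_hd ha_tl
  by_contra ha
  refine lt_irrefl j (hP a (fun ha_arrs => ?_) j j ha_hd ha_tl)
  obtain ⟨k, -, hk⟩ := Finset.mem_biUnion.mp ha_arrs
  have hjk : j = k :=
    (P.mem_verts_iff.mp ha_hd).symm.trans (P.mem_verts_iff.mp ((P.part k).hd_mem a hk))
  exact ha (hjk ▸ hk)

variable {P} in
lemma Ordered.partOf_hd_le_partOf_tl (hP : P.Ordered) (a : Q.Arr) :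
    P.partOf (Q.hd a) ≤ P.partOf (Q.tl a) := by
  by_cases ha : a ∈ P.arrs
  · obtain ⟨k, -, hk⟩ := Finset.mem_biUnion.mp ha
    exact ((P.mem_verts_iff.mp ((P.part k).hd_mem a hk)).trans
      (P.mem_verts_iff.mp ((P.part k).tl_mem a hk)).symm).le
  · exact (hP a ha _ _ (P.mem_verts_iff.mpr rfl) (P.mem_verts_iff.mpr rfl)).le

/-- The tuples `(γ¹,…,γ^ℓ)` of dimension vectors with `γ^j` supported on the `j`-th part. -/
abbrev DimTuple : Type :=
  {gs : Fin ℓ → Fin n → ℕ // ∀ j, ∀ i, i ∉ (P.part j).verts → gs j i = 0}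

variable {P} in
lemma DimTuple.eq_zero_of_partOf_ne (gs : P.DimTuple) (j : Fin ℓ) (i : Fin n)
    (hi : P.partOf i ≠ j) : gs.1 j i = 0 :=
  gs.2 j i (mt P.mem_verts_iff.mp hi)

variable {P} in
lemma Ordered.nonInteracting (hP : P.Ordered) (gs : P.DimTuple) {j k : Fin ℓ} (hjk : j < k) :
    NonInteracting Q (gs.1 j) (gs.1 k) := by
  refine ⟨fun i => ?_, fun a => ?_⟩
  · by_contra! h
    exact hjk.ne ((not_imp_comm.mp (gs.eq_zero_of_partOf_ne j i) h.1).symm.trans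
      (not_imp_comm.mp (gs.eq_zero_of_partOf_ne k i) h.2))
  · by_contra! h
    have hd_part := not_imp_comm.mp (gs.eq_zero_of_partOf_ne k (Q.hd a)) h.1
    have tl_part := not_imp_comm.mp (gs.eq_zero_of_partOf_ne j (Q.tl a)) h.2
    exact hjk.not_ge (hd_part ▸ tl_part ▸ hP.partOf_hd_le_partOf_tl a)

/-- Dimension vectors correspond to the tuples of their restrictions to the parts; the inverse sums
up the tuple. -/
noncomputable def dimTupleEquiv : (Fin n → ℕ) ≃ P.DimTuple where
  toFun γ := ⟨fun j i => if P.partOf i = j then γ i else 0,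
    fun _ _ hi => if_neg (mt P.mem_verts_iff.mpr hi)⟩
  invFun gs := fun v => ∑ j, gs.1 j v
  left_inv γ := by
    ext i
    simp
  right_inv gs := by
    ext j i
    dsimp only
    split_ifs with hi
    · rw [sum_eq_apply_of_support gs.eq_zero_of_partOf_ne, hi]
    · exact (gs.eq_zero_of_partOf_ne j i hi).symm

/-- The grading of `ℋ(Q)` reindexed by tuples of dimension vectors supported on the parts. -/
noncomputable def reindexEquiv :
    (⨁ gs : P.DimTuple, Hspace fun v => ∑ j, gs.1 j v) ≃ₗ[ℚ] ⨁ γ : Fin n → ℕ, Hspace γ :=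
  (DirectSum.lequivCongrLeft ℚ (M := fun γ => Hspace γ) P.dimTupleEquiv).symm

lemma reindexEquiv_of (gs : P.DimTuple) (f : Hspace fun v => ∑ j, gs.1 j v) :
    P.reindexEquiv (DirectSum.of (fun gs' : P.DimTuple => Hspace fun v => ∑ j, gs'.1 j v) gs f) =
      DirectSum.of (fun γ => Hspace γ) (fun v => ∑ j, gs.1 j v) f :=
  DirectSum.lequivCongrLeft_symm_lof ℚ (M := fun γ => Hspace γ) (h := P.dimTupleEquiv)

/-- The isomorphism `⨁ (ℋ_{γ¹} ⊗ ⋯ ⊗ ℋ_{γ^ℓ}) ≃ ⨁ ℋ_γ` given by multiplication of polynomials. -/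
noncomputable def decompositionEquiv :
    (⨁ gs : P.DimTuple, ⨂[ℚ] j, Hspace (gs.1 j)) ≃ₗ[ℚ] ⨁ γ : Fin n → ℕ, Hspace γ :=
  (DirectSum.congrLinearEquiv fun gs : P.DimTuple =>
    mulHspaceEquiv gs.eq_zero_of_partOf_ne).trans P.reindexEquiv

lemma decompositionEquiv_of (gs : P.DimTuple) (t : ⨂[ℚ] j, Hspace (gs.1 j)) :
    P.decompositionEquiv
        (DirectSum.of (fun gs' : P.DimTuple => ⨂[ℚ] j, Hspace (gs'.1 j)) gs t) =
      DirectSum.of (fun γ => Hspace γ) (fun v => ∑ j, gs.1 j v)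
        (mulHspaceEquiv gs.eq_zero_of_partOf_ne t) := by
  rw [decompositionEquiv, LinearEquiv.trans_apply, DirectSum.coe_congrLinearEquiv,
    DirectSum.lmap_of]
  exact P.reindexEquiv_of gs _

end SubqPartition

theorem coha_dynkin_part_decomposition_general {n ℓ : ℕ} (Q : FinQuiver n)
    (P : SubqPartition Q ℓ) (hord : P.Ordered) :
    (∀ (j : Fin ℓ) (γ₁ γ₂ : Fin n → ℕ),
      (∀ i, i ∉ (P.part j).verts → γ₁ i = 0) → (∀ i, i ∉ (P.part j).verts → γ₂ i = 0) →
      ∀ g₁ ∈ Hspace γ₁, ∀ g₂ ∈ Hspace γ₂,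
        cohaMul Q γ₁ γ₂ g₁ g₂ = cohaMul ((P.part j).toQuiver) γ₁ γ₂ g₁ g₂) ∧
    ∃ Φ : (⨁ gs : P.DimTuple, ⨂[ℚ] j : Fin ℓ, ↥(Hspace (gs.1 j))) →ₗ[ℚ]
        ⨁ γ : Fin n → ℕ, ↥(Hspace γ),
      (∀ (gs : P.DimTuple) (g : (j : Fin ℓ) → ↥(Hspace (gs.1 j))),
        ∃ hmem : cohaProdFin Q (fun j => gs.1 j) (fun j => (g j : PolyQ n)) ∈
            Hspace (fun v => ∑ j, gs.1 j v),
          Φ (DirectSum.of (fun gs' : P.DimTuple => ⨂[ℚ] j : Fin ℓ, ↥(Hspace (gs'.1 j))) gs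
              (PiTensorProduct.tprod ℚ g)) =
            DirectSum.of (fun γ : Fin n → ℕ => ↥(Hspace γ)) (fun v => ∑ j, gs.1 j v)
              ⟨cohaProdFin Q (fun j => gs.1 j) (fun j => (g j : PolyQ n)), hmem⟩) ∧
      Function.Bijective Φ := by
  refine ⟨fun j γ₁ γ₂ hγ₁ hγ₂ g₁ _ g₂ _ => (cohaMul_toQuiver (hord.full j) hγ₁ hγ₂ g₁ g₂).symm,
    P.decompositionEquiv, fun gs g => ?_, P.decompositionEquiv.bijective⟩
  have coe_equiv_eq_cohaProdFin :
      (mulHspaceEquiv gs.eq_zero_of_partOf_ne (PiTensorProduct.tprod ℚ g) : PolyQ n) =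
        cohaProdFin Q (fun j => gs.1 j) fun j => (g j : PolyQ n) := by
    rw [coe_mulHspaceEquiv_tprod, cohaProdFin_eq_prod (fun j => mem_supported_dimVars (g j).2)
      fun _ _ => hord.nonInteracting gs]
  refine ⟨coe_equiv_eq_cohaProdFin ▸ Subtype.prop _, ?_⟩
  exact (P.decompositionEquiv_of gs _).trans
    (congrArg (DirectSum.of (fun γ => Hspace γ) _) (Subtype.ext coe_equiv_eq_cohaProdFin))


/-- Let `𝒬• = (Q¹,…,Q^ℓ)` be an admissible, ordered, Dynkin
subquiver partition of the acyclic quiver `Q` such that every positive root of every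
part has some coordinate equal to `1` (excluding `E₈` parts).  Then:
(a) for classes supported on a single part `Q^j`, the CoHA product of `ℋ(Q)` agrees
with the CoHA product of the quiver `Q^j`; and
(b) the `ℚ`-linear map `⊕ (ℋ_{γ¹} ⊗ ⋯ ⊗ ℋ_{γ^ℓ}) → ℋ(Q)`, over all tuples of
dimension vectors with `γ^j` supported on `Q^j₀`, sending `g₁ ⊗ ⋯ ⊗ g_ℓ` to
`g₁ * ⋯ * g_ℓ`, is bijective — so it is an algebra isomorphism
`ℋ(Q¹) ⊗ ⋯ ⊗ ℋ(Q^ℓ) ≅ ℋ(Q)`. -/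
theorem coha_dynkin_part_decomposition {n ℓ : ℕ} (Q : FinQuiver n) (hQ : Q.Acyclic)
    (P : SubqPartition Q ℓ) (hord : P.Ordered) (hDyn : P.Dynkin)
    (hE8 : ∀ (j : Fin ℓ) (b : Fin n → ℕ), (P.part j).IsPosRoot b → ∃ i, b i = 1) :
    (∀ (j : Fin ℓ) (γ₁ γ₂ : Fin n → ℕ),
      (∀ i, i ∉ (P.part j).verts → γ₁ i = 0) → (∀ i, i ∉ (P.part j).verts → γ₂ i = 0) →
      ∀ g₁ ∈ Hspace γ₁, ∀ g₂ ∈ Hspace γ₂,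
        cohaMul Q γ₁ γ₂ g₁ g₂ = cohaMul ((P.part j).toQuiver) γ₁ γ₂ g₁ g₂) ∧
    ∃ Φ : (⨁ gs : {gs : Fin ℓ → Fin n → ℕ //
              ∀ j, ∀ i, i ∉ (P.part j).verts → gs j i = 0},
            ⨂[ℚ] j : Fin ℓ, ↥(Hspace (gs.1 j)))
        →ₗ[ℚ] ⨁ γ : Fin n → ℕ, ↥(Hspace γ),
      (∀ (gs : {gs : Fin ℓ → Fin n → ℕ //
            ∀ j, ∀ i, i ∉ (P.part j).verts → gs j i = 0})
          (g : (j : Fin ℓ) → ↥(Hspace (gs.1 j))),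
        ∃ hmem : cohaProdFin Q (fun j => gs.1 j) (fun j => (g j : PolyQ n)) ∈
            Hspace (fun v => ∑ j, gs.1 j v),
          Φ (DirectSum.of (fun gs' : {gs : Fin ℓ → Fin n → ℕ //
                  ∀ j, ∀ i, i ∉ (P.part j).verts → gs j i = 0} =>
                ⨂[ℚ] j : Fin ℓ, ↥(Hspace (gs'.1 j))) gs
              (PiTensorProduct.tprod ℚ g)) =
            DirectSum.of (fun γ : Fin n → ℕ => ↥(Hspace γ)) (fun v => ∑ j, gs.1 j v)
              ⟨cohaProdFin Q (fun j => gs.1 j) (fun j => (g j : PolyQ n)), hmem⟩) ∧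
      Function.Bijective Φ :=
  coha_dynkin_part_decomposition_general Q P hord
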